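/- Let (G,·,e) be a group with braiding operator r, written r(x,y) = (σ_x(y), γ_y(x)) with each σ_x bijective, and let (F,Φ,Ψ) be a Drinfeld twist on (G,·,e,r). Let ∘ := m∘F⁻¹ be the twisted multiplication with twisted braiding r' := F∘r∘F⁻¹, written r'(x,y) = (σ̲_x(y), γ̲_y(x)) with each σ̲_x bijective, and let ⋆ and ⋆' be the respective additive group operations, x ⋆ y := x·σ_x⁻¹(y) and x ⋆' y := x∘σ̲_x⁻¹(y). Then there exists a family of bijections {f_x : G → G}_{x∈G} such that each f_x satisfies f_x(a⋆b) = f_x(a) ⋆' f_x(b) for all a,b ∈ G and f_x(x) = x, and for all x,y ∈ G: F(x,y) = (f_{x·y}(x), σ̲_{f_{x·y}(x)}⁻¹(f_{x·y}(σ_x(y)))), equivalently F(x,y) = (f_{x·y}(x), f_{x·y}(x)^{-∘} ∘ (x·y)), where ^{-∘} denotes the inverse with respect to ∘. -/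

import Mathlib

namespace BraceTwist

/-- Apply a map on `G × G` to the factors 1,2 of a triple: `f₁₂ = f × id`. -/
def E12 {G : Type*} (f : (G × G) ≃ (G × G)) : (G × G × G) ≃ (G × G × G) :=
  ((Equiv.prodAssoc G G G).symm.trans (f.prodCongr (Equiv.refl G))).trans
    (Equiv.prodAssoc G G G)

/-- Apply a map on `G × G` to the factors 2,3 of a triple: `f₂₃ = id × f`. -/
def E23 {G : Type*} (f : (G × G) ≃ (G × G)) : (G × G × G) ≃ (G × G × G) :=
  (Equiv.refl G).prodCongr f

/-- `m₁₂ : G³ → G²`, multiplying the first two factors. -/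
def M12 {G : Type*} (mul : G → G → G) : G × G × G → G × G :=
  fun p => (mul p.1 p.2.1, p.2.2)

/-- `m₂₃ : G³ → G²`, multiplying the last two factors. -/
def M23 {G : Type*} (mul : G → G → G) : G × G × G → G × G :=
  fun p => (p.1, mul p.2.1 p.2.2)

/-- `(mul, e, inv)` is a group structure on `G`. -/
structure IsGroup {G : Type*} (mul : G → G → G) (e : G) (inv : G → G) : Prop where
  mul_assoc : ∀ a b c, mul (mul a b) c = mul a (mul b c)
  one_mul : ∀ a, mul e a = a
  mul_one : ∀ a, mul a e = a
  inv_mul : ∀ a, mul (inv a) a = e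
  mul_inv : ∀ a, mul a (inv a) = e

/-- `r` is a braiding operator on the group `(G, mul, e)`. -/
structure IsBraidingOp {G : Type*} (mul : G → G → G) (e : G)
    (r : (G × G) ≃ (G × G)) : Prop where
  unit_left : ∀ g, r (e, g) = (g, e)
  unit_right : ∀ g, r (g, e) = (e, g)
  br1 : ∀ p : G × G × G, r (M12 mul p) = M23 mul (E12 r (E23 r p))
  br2 : ∀ p : G × G × G, r (M23 mul p) = M12 mul (E23 r (E12 r p))
  mul_r : ∀ p : G × G, mul (r p).1 (r p).2 = mul p.1 p.2

/-- A Drinfeld twist `(F, Φ, Ψ)` on the group with braiding operator `(G, mul, e, r)`. -/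
structure IsGrpTwist {G : Type*} (mul : G → G → G) (e : G)
    (r F : (G × G) ≃ (G × G)) (Φ Ψ : (G × G × G) ≃ (G × G × G)) : Prop where
  t1 : ∀ p, E12 F (Ψ p) = E23 F (Φ p)
  t2 : ∀ p, Φ (E23 r p) = E23 r (Φ p)
  t3 : ∀ p, Ψ (E12 r p) = E12 r (Ψ p)
  g1a : ∀ x y, Ψ (x, y, e) = (x, y, e)
  g1b : ∀ x y, Φ (e, x, y) = (e, x, y)
  g2a : ∀ x, F (e, x) = (e, x)
  g2b : ∀ x, F (x, e) = (x, e)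
  g3 : ∀ p : G × G × G, M23 mul (Φ p) = F (M23 mul p)
  g4 : ∀ p : G × G × G, M12 mul (Ψ p) = F (M12 mul p)

/-- The twisted map `F ∘ r ∘ F⁻¹`. -/
def twisted {G : Type*} (r F : (G × G) ≃ (G × G)) : (G × G) ≃ (G × G) :=
  (F.symm.trans r).trans F

/-- The twisted multiplication `m ∘ F⁻¹`. -/
def twistMul {G : Type*} (mul : G → G → G) (F : (G × G) ≃ (G × G)) : G → G → G :=
  fun x y => mul (F.symm (x, y)).1 (F.symm (x, y)).2

theorem twistMul_apply {G : Type*} (mul : G → G → G) (F : (G × G) ≃ (G × G)) (p : G × G) :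
    twistMul mul F (F p).1 (F p).2 = mul p.1 p.2 := by
  simp [twistMul]

namespace IsGrpTwist

variable {G : Type*} {mul : G → G → G} {e : G} {r F : (G × G) ≃ (G × G)}
  {Φ Ψ : (G × G × G) ≃ (G × G × G)}

/-- The first component of `F₁₂ ∘ Ψ` is the first component of `F ∘ m₂₃`. -/
theorem apply_psi_fst (ht : IsGrpTwist mul e r F Φ Ψ) (x y z : G) :
    (F ((Ψ (x, y, z)).1, (Ψ (x, y, z)).2.1)).1 = (F (x, mul y z)).1 :=
  (congrArg Prod.fst (ht.t1 (x, y, z))).trans (congrArg Prod.fst (ht.g3 (x, y, z)))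

theorem twistMul_one_left (ht : IsGrpTwist mul e r F Φ Ψ) {inv : G → G}
    (hG : IsGroup mul e inv) (x : G) : twistMul mul F e x = x := by
  have h := twistMul_apply mul F (e, x)
  rwa [ht.g2a, hG.one_mul] at h

theorem twistMul_assoc (ht : IsGrpTwist mul e r F Φ Ψ) {inv : G → G}
    (hG : IsGroup mul e inv) (a b c : G) :
    twistMul mul F (twistMul mul F a b) c = twistMul mul F a (twistMul mul F b c) := by
  obtain ⟨⟨x, y, z⟩, hp⟩ := (Ψ.trans (E12 F)).surjective (a, b, c)
  have hΨ : E12 F (Ψ (x, y, z)) = (a, b, c) := hp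
  have hΦ : E23 F (Φ (x, y, z)) = (a, b, c) := (ht.t1 _).symm.trans hp
  have h4 := ht.g4 (x, y, z)
  have h3 := ht.g3 (x, y, z)
  rcases hq : Ψ (x, y, z) with ⟨a₁, b₁, c₁⟩
  rcases hs : Φ (x, y, z) with ⟨a₂, b₂, c₂⟩
  simp only [hq, hs, E12, E23, M12, M23, Equiv.trans_apply, Equiv.prodAssoc_symm_apply,
    Equiv.prodCongr_apply, Equiv.coe_refl, Prod.map_apply, id, Equiv.prodAssoc_apply,
    Prod.mk.injEq] at hΨ hΦ h3 h4
  obtain ⟨rfl, rfl, rfl⟩ := hΨ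
  obtain ⟨ha, hbc⟩ := hΦ
  have hb := twistMul_apply mul F (b₂, c₂)
  have hl := twistMul_apply mul F (mul x y, z)
  have hm := twistMul_apply mul F (x, mul y z)
  rw [hbc] at hb
  rw [← h4] at hl
  rw [← h3] at hm
  dsimp only at hb hl hm
  rw [twistMul_apply, hb, hl, ← ha, hm]
  exact hG.mul_assoc x y z

/-- Compatibility of the components of `F` with the braiding: writing `Ψ(x, y, z) = (x', y', z')`,
the second component of `F(x', y')` is obtained from first components of `F`. -/
theorem apply_psi_snd (ht : IsGrpTwist mul e r F Φ Ψ) {inv : G → G} (hG : IsGroup mul e inv)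
    (hbr : IsBraidingOp mul e r) {σ γ σ' γ' τ' : G → G → G}
    (hr : ∀ x y, r (x, y) = (σ x y, γ y x))
    (hr' : ∀ x y, twisted r F (x, y) = (σ' x y, γ' y x))
    (hτ' : ∀ x, Function.LeftInverse (τ' x) (σ' x)) (x y z : G) :
    (F ((Ψ (x, y, z)).1, (Ψ (x, y, z)).2.1)).2 =
      τ' (F (x, mul y z)).1
        (F (σ x y, mul (inv (σ x y)) (mul (mul x y) z))).1 := by
  have h3 : Ψ (σ x y, γ y x, z) = E12 r (Ψ (x, y, z)) := by
    rw [← ht.t3, ← show E12 r (x, y, z) = (σ x y, γ y x, z) by simp [E12, hr]]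
  have hm : mul (σ x y) (γ y x) = mul x y := by simpa [hr] using hbr.mul_r (x, y)
  have hz : mul (inv (σ x y)) (mul (mul x y) z) = mul (γ y x) z := by
    rw [← hm, hG.mul_assoc, ← hG.mul_assoc, hG.inv_mul, hG.one_mul]
  have hσ := ht.apply_psi_fst (σ x y) (γ y x) z
  have hx := ht.apply_psi_fst x y z
  rw [h3] at hσ
  rcases hq : Ψ (x, y, z) with ⟨a, b, c⟩
  rw [hq] at hσ hx
  have htw := hr' (F (a, b)).1 (F (a, b)).2
  simp only [twisted, Prod.mk.eta, Equiv.trans_apply, Equiv.symm_apply_apply] at htw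
  have hσ' : (F (r (a, b))).1 = (F (σ x y, mul (γ y x) z)).1 := hσ
  rw [hz, ← hσ', htw, ← hx]
  exact (hτ' _ _).symm

end IsGrpTwist

theorem twist_decomposition {G : Type*} (mul : G → G → G) (e : G)
    (inv : G → G) (hG : IsGroup mul e inv)
    (r F : (G × G) ≃ (G × G)) (Φ Ψ : (G × G × G) ≃ (G × G × G))
    (σ γ τ σ' γ' τ' : G → G → G) (oinv : G → G)
    (hbr : IsBraidingOp mul e r)
    (hr : ∀ x y, r (x, y) = (σ x y, γ y x))
    (hτ : ∀ x, Function.LeftInverse (τ x) (σ x) ∧ Function.RightInverse (τ x) (σ x))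
    (ht : IsGrpTwist mul e r F Φ Ψ)
    (hr' : ∀ x y, twisted r F (x, y) = (σ' x y, γ' y x))
    (hτ' : ∀ x, Function.LeftInverse (τ' x) (σ' x) ∧ Function.RightInverse (τ' x) (σ' x))
    (hoinv : ∀ x, twistMul mul F (oinv x) x = e ∧ twistMul mul F x (oinv x) = e) :
    ∃ f : G → G → G,
      (∀ x, Function.Bijective (f x)) ∧
      (∀ x a b, f x (mul a (τ a b)) = twistMul mul F (f x a) (τ' (f x a) (f x b))) ∧
      (∀ x, f x x = x) ∧
      (∀ x y, F (x, y) =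
        (f (mul x y) x, τ' (f (mul x y) x) (f (mul x y) (σ x y)))) ∧
      (∀ x y, F (x, y) =
        (f (mul x y) x, twistMul mul F (oinv (f (mul x y) x)) (mul x y))) := by
  have hcancel : ∀ x y, mul x (mul (inv x) y) = y := fun x y => by
    rw [← hG.mul_assoc, hG.mul_inv, hG.one_mul]
  have hcancel' : ∀ x y, mul (inv x) (mul x y) = y := fun x y => by
    rw [← hG.mul_assoc, hG.inv_mul, hG.one_mul]
  have hsnd : ∀ p, (F p).2 = twistMul mul F (oinv (F p).1) (mul p.1 p.2) := fun p => by
    rw [← twistMul_apply mul F p, ← ht.twistMul_assoc hG, (hoinv _).1, ht.twistMul_one_left hG]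
  have hpsi := ht.apply_psi_snd hG hbr hr hr' fun x => (hτ' x).1
  refine ⟨fun x a => (F (a, mul (inv a) x)).1, fun x => ⟨fun a b hab => ?_, fun u => ?_⟩,
    fun x a b => ?_, fun x => ?_, fun x y => ?_, fun x y => ?_⟩
  · dsimp only at hab
    have h : F (a, mul (inv a) x) = F (b, mul (inv b) x) := by
      refine Prod.ext hab ?_
      rw [hsnd, hsnd, hab]
      simp only [hcancel]
    exact congrArg Prod.fst (F.injective h)
  · obtain ⟨⟨a, b⟩, hab⟩ := F.surjective (u, twistMul mul F (oinv u) x)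
    have hx : mul a b = x := by
      have h := twistMul_apply mul F (a, b)
      rw [hab, ← ht.twistMul_assoc hG, (hoinv u).2, ht.twistMul_one_left hG] at h
      exact h.symm
    refine ⟨a, ?_⟩
    dsimp only
    rw [← hx, hcancel', hab]
  · dsimp only
    set w := τ a b
    have hb : b = σ a w := ((hτ a).2 b).symm
    set z := mul (inv (mul a w)) x
    have hx : x = mul (mul a w) z := (hcancel _ _).symm
    have hwz : mul (inv a) x = mul w z := by rw [hx, hG.mul_assoc, hcancel']
    have h4 : mul (Ψ (a, w, z)).1 (Ψ (a, w, z)).2.1 = (F (mul a w, z)).1 :=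
      congrArg Prod.fst (ht.g4 (a, w, z))
    have h := hpsi a w z
    rw [← hx, ← hb] at h
    rw [← h4, hwz, ← h, ← ht.apply_psi_fst]
    exact (twistMul_apply mul F ((Ψ (a, w, z)).1, (Ψ (a, w, z)).2.1)).symm
  · dsimp only
    rw [hG.inv_mul, ht.g2b]
  · have h := hpsi x y e
    simp only [ht.g1a, hG.mul_one] at h
    simp only [hcancel', ← h]
  · have h := hsnd (x, y)
    simp only [hcancel', ← h]

end BraceTwist
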